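/- Let μ : ℕ → ℝ be a sequence with μⱼ > 0 for all j and |μⱼ − π²(j + 1/2)²| ≤ C for all j ∈ ℕ and some constant C > 0, and write νⱼ := π²(j + 1/2)². Then the quotient ∏_{j=0}^∞ (1 + y²/μⱼ) / ∏_{j=0}^∞ (1 + y²/νⱼ) tends to ∏_{j=0}^∞ νⱼ/μⱼ as y → +∞ (all three infinite products being convergent). -/

import Mathlib

open Real Filter

/-!
The quotient of two corresponding factors is
`(1 + t / μ) / (1 + t / ν) = 1 + (ν / μ - 1) * (t / (ν + t))`.
As `t → ∞` it tends to `ν / μ`, and as long as `t / (ν + t)` stays bounded it differs from `1` by at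
most a multiple of `|ν / μ - 1|`, which is summable and independent of `t`. Dominated convergence
for infinite products then lets the limit pass through the product.
-/

section PerturbedProducts

open Asymptotics Bornology
open scoped Topology

variable {ι 𝕜 : Type*} [NormedField 𝕜]

lemma tendsto_one_of_summable_norm_sub_one {r : ι → 𝕜} (hr : Summable fun j => ‖r j - 1‖) :
    Tendsto r cofinite (𝓝 1) :=
  tendsto_iff_norm_sub_tendsto_zero.2 hr.tendsto_cofinite_zero

lemma isBigO_inv_one_of_summable_norm_sub_one {r : ι → 𝕜} (hr : Summable fun j => ‖r j - 1‖) :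
    (fun j => (r j)⁻¹) =O[cofinite] fun _ => (1 : 𝕜) :=
  ((tendsto_one_of_summable_norm_sub_one hr).inv₀ one_ne_zero).isBigO_one 𝕜

lemma summable_norm_inv_sub_one {r : ι → 𝕜} (hr : Summable fun j => ‖r j - 1‖) :
    Summable fun j => ‖(r j)⁻¹ - 1‖ := by
  have hfactor : (fun j => (r j)⁻¹ * (1 - r j)) =ᶠ[cofinite] fun j => (r j)⁻¹ - 1 := by
    filter_upwards [(tendsto_one_of_summable_norm_sub_one hr).eventually_ne one_ne_zero] with j hj
    rw [mul_sub, mul_one, inv_mul_cancel₀ hj]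
  have hsub : (fun j => 1 - r j) =O[cofinite] fun j => r j - 1 :=
    isBigO_of_le _ fun j => (norm_sub_rev _ _).le
  have hO := ((isBigO_inv_one_of_summable_norm_sub_one hr).mul hsub).congr' hfactor .rfl
  simp only [one_mul] at hO
  exact summable_of_isBigO hr hO.norm_norm

lemma summable_norm_inv_of_summable_norm_div_sub_one {μ ν : ι → 𝕜} (hν₀ : ∀ j, ν j ≠ 0)
    (hν : Summable fun j => ‖(ν j)⁻¹‖) (hμν : Summable fun j => ‖μ j / ν j - 1‖) :
    Summable fun j => ‖(μ j)⁻¹‖ := by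
  have hfactor (j : ι) : (μ j / ν j)⁻¹ * (ν j)⁻¹ = (μ j)⁻¹ := by
    rw [← mul_inv, div_mul_cancel₀ _ (hν₀ j)]
  have hO := (isBigO_inv_one_of_summable_norm_sub_one hμν).mul
    (isBigO_refl (fun j => (ν j)⁻¹) cofinite)
  simp only [hfactor, one_mul] at hO
  exact summable_of_isBigO hν hO.norm_norm

lemma summable_norm_div_sub_one_of_norm_sub_le {μ ν : ι → 𝕜} {C : ℝ} (hν₀ : ∀ j, ν j ≠ 0)
    (hν : Summable fun j => ‖(ν j)⁻¹‖) (hC : ∀ j, ‖μ j - ν j‖ ≤ C) :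
    Summable fun j => ‖μ j / ν j - 1‖ := by
  refine (hν.mul_left C).of_nonneg_of_le (fun _ => norm_nonneg _) fun j => ?_
  rw [div_sub_one (hν₀ j), div_eq_mul_inv, norm_mul]
  gcongr
  exact hC j

lemma summable_norm_div_of_summable_norm_inv {κ : ι → 𝕜} (hκ : Summable fun j => ‖(κ j)⁻¹‖)
    (t : 𝕜) : Summable fun j => ‖t / κ j‖ := by
  simpa only [div_eq_mul_inv, norm_mul] using hκ.mul_left ‖t‖

lemma tendsto_div_const_add_cobounded (c : 𝕜) :
    Tendsto (fun t => t / (c + t)) (cobounded 𝕜) (𝓝 1) := by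
  have hinv : Tendsto (fun t => (c + t)⁻¹) (cobounded 𝕜) (𝓝 0) :=
    tendsto_inv₀_cobounded.comp (tendsto_const_add_cobounded c)
  have hlim : Tendsto (fun t => 1 - c * (c + t)⁻¹) (cobounded 𝕜) (𝓝 1) := by
    simpa using (hinv.const_mul c).const_sub 1
  refine hlim.congr' ?_
  filter_upwards [eventually_ne_cobounded (-c)] with t ht
  have hct : c + t ≠ 0 := fun h => ht (eq_neg_of_add_eq_zero_right h)
  field_simp
  ring

lemma one_add_div_div_one_add_div {m n t : 𝕜} (hm : m ≠ 0) (hn : n ≠ 0) (hnt : n + t ≠ 0) :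
    (1 + t / m) / (1 + t / n) = 1 + (n / m - 1) * (t / (n + t)) := by
  field_simp
  ring

variable [CompleteSpace 𝕜]

lemma multipliable_one_add_div {κ : ι → 𝕜} (hκ : Summable fun j => ‖(κ j)⁻¹‖) (t : 𝕜) :
    Multipliable fun j => 1 + t / κ j :=
  multipliable_one_add_of_summable (summable_norm_div_of_summable_norm_inv hκ t)

lemma multipliable_of_summable_norm_sub_one {r : ι → 𝕜} (hr : Summable fun j => ‖r j - 1‖) :
    Multipliable r := by
  simpa only [add_sub_cancel] using multipliable_one_add_of_summable hr

lemma tprod_one_add_div_div_tprod_one_add_div {μ ν : ι → 𝕜} (hμ₀ : ∀ j, μ j ≠ 0)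
    (hν₀ : ∀ j, ν j ≠ 0) (hμ : Summable fun j => ‖(μ j)⁻¹‖) (hν : Summable fun j => ‖(ν j)⁻¹‖)
    {t : 𝕜} (ht : ∀ j, ν j + t ≠ 0) :
    (∏' j, (1 + t / μ j)) / ∏' j, (1 + t / ν j) =
      ∏' j, (1 + (ν j / μ j - 1) * (t / (ν j + t))) := by
  have hne : ∏' j, (1 + t / ν j) ≠ 0 :=
    tprod_one_add_ne_zero_of_summable
      (fun j => by rw [one_add_div (hν₀ j)]; exact div_ne_zero (ht j) (hν₀ j))
      (summable_norm_div_of_summable_norm_inv hν t)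
  rw [← (multipliable_one_add_div hμ t).tprod_div₀ (multipliable_one_add_div hν t) hne]
  exact tprod_congr fun j => one_add_div_div_one_add_div (hμ₀ j) (hν₀ j) (ht j)

lemma tendsto_tprod_one_add_sub_one_mul {α : Type*} {l : Filter α} {r : ι → 𝕜} {w : α → ι → 𝕜}
    {M : ℝ} (hr : Summable fun j => ‖r j - 1‖) (hw : ∀ j, Tendsto (w · j) l (𝓝 1))
    (hM : ∀ᶠ a in l, ∀ j, ‖w a j‖ ≤ M) :
    Tendsto (fun a => ∏' j, (1 + (r j - 1) * w a j)) l (𝓝 (∏' j, r j)) := by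
  have hlim (j : ι) : Tendsto (fun a => (r j - 1) * w a j) l (𝓝 (r j - 1)) := by
    simpa only [mul_one] using (hw j).const_mul (r j - 1)
  have hbound : ∀ᶠ a in l, ∀ j, ‖(r j - 1) * w a j‖ ≤ ‖r j - 1‖ * M := by
    filter_upwards [hM] with a ha j
    rw [norm_mul]
    gcongr
    exact ha j
  simpa only [add_sub_cancel] using
    tendsto_tprod_one_add_of_dominated_convergence (hr.mul_right M) hlim hbound

/-- The bound `hM` keeps `t` away from the zeros `-ν j` of the denominator. Over `ℂ` it holds when
every `t / ν j` stays out of a fixed sector around the negative real axis. -/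
theorem gamma_identification_limit_general {μ ν : ι → 𝕜} (hμ₀ : ∀ j, μ j ≠ 0)
    (hν₀ : ∀ j, ν j ≠ 0) (hν : Summable fun j => ‖(ν j)⁻¹‖)
    (hμν : Summable fun j => ‖μ j / ν j - 1‖) {l : Filter 𝕜} (hl : l ≤ cobounded 𝕜) {M : ℝ}
    (hM : ∀ᶠ t in l, ∀ j, ‖t‖ ≤ M * ‖ν j + t‖) :
    (∀ t, Multipliable fun j => 1 + t / μ j) ∧
    (∀ t, Multipliable fun j => 1 + t / ν j) ∧
    (Multipliable fun j => ν j / μ j) ∧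
    Tendsto (fun t => (∏' j, (1 + t / μ j)) / ∏' j, (1 + t / ν j)) l (𝓝 (∏' j, ν j / μ j)) := by
  have hμ := summable_norm_inv_of_summable_norm_div_sub_one hν₀ hν hμν
  have hνμ : Summable fun j => ‖ν j / μ j - 1‖ := by
    simpa only [inv_div] using summable_norm_inv_sub_one hμν
  have hne : ∀ᶠ t in l, ∀ j, ν j + t ≠ 0 := by
    filter_upwards [hM, hl (eventually_ne_cobounded 0)] with t htM ht₀ j hj
    exact ht₀ (norm_le_zero_iff.1 (by simpa [hj] using htM j))
  refine ⟨multipliable_one_add_div hμ, multipliable_one_add_div hν,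
    multipliable_of_summable_norm_sub_one hνμ, ?_⟩
  have hlim : Tendsto (fun t => ∏' j, (1 + (ν j / μ j - 1) * (t / (ν j + t)))) l
      (𝓝 (∏' j, ν j / μ j)) := by
    refine tendsto_tprod_one_add_sub_one_mul (M := M) hνμ
      (fun j => (tendsto_div_const_add_cobounded (ν j)).mono_left hl) ?_
    filter_upwards [hM, hne] with t htM ht j
    rw [norm_div, div_le_iff₀ (norm_pos_iff.2 (ht j))]
    exact htM j
  refine hlim.congr' ?_
  filter_upwards [hne] with t ht
  exact (tprod_one_add_div_div_tprod_one_add_div hμ₀ hν₀ hμ hν ht).symm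

end PerturbedProducts

lemma eventually_atTop_norm_le_norm_add {ι : Type*} {ν : ι → ℝ} (hν : ∀ j, 0 ≤ ν j) :
    ∀ᶠ t in atTop, ∀ j, ‖t‖ ≤ ‖ν j + t‖ := by
  filter_upwards [eventually_ge_atTop 0] with t ht j
  rw [norm_of_nonneg ht, norm_of_nonneg (add_nonneg (hν j) ht)]
  exact le_add_of_nonneg_left (hν j)

lemma summable_norm_inv_mul_nat_add_sq (c a : ℝ) :
    Summable fun j : ℕ => ‖(c * ((j : ℝ) + a) ^ 2)⁻¹‖ := by
  have hsq := (Real.summable_one_div_nat_add_rpow a 2).2 one_lt_two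
  simp only [rpow_two, sq_abs, one_div] at hsq
  simpa only [mul_inv] using (hsq.mul_left c⁻¹).norm

/-- with `νⱼ = π²(j + 1/2)²`, the quotient
`∏ⱼ(1 + y²/μⱼ) / ∏ⱼ(1 + y²/νⱼ)` tends to `∏ⱼ νⱼ/μⱼ` as `y → +∞`,
all three infinite products being convergent. -/
theorem gamma_identification_limit
    (μ : ℕ → ℝ) (hpos : ∀ j : ℕ, 0 < μ j)
    (C : ℝ) (hC : 0 < C)
    (hasymp : ∀ j : ℕ, |μ j - π ^ 2 * ((j : ℝ) + 1 / 2) ^ 2| ≤ C) :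
    (∀ y : ℝ, Multipliable (fun j : ℕ => 1 + y ^ 2 / μ j)) ∧
    (∀ y : ℝ, Multipliable (fun j : ℕ => 1 + y ^ 2 / (π ^ 2 * ((j : ℝ) + 1 / 2) ^ 2))) ∧
    Multipliable (fun j : ℕ => (π ^ 2 * ((j : ℝ) + 1 / 2) ^ 2) / μ j) ∧
    Tendsto
      (fun y : ℝ =>
        (∏' j : ℕ, (1 + y ^ 2 / μ j)) /
          ∏' j : ℕ, (1 + y ^ 2 / (π ^ 2 * ((j : ℝ) + 1 / 2) ^ 2)))
      atTop (nhds (∏' j : ℕ, (π ^ 2 * ((j : ℝ) + 1 / 2) ^ 2) / μ j)) := by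
  have hν₀ (j : ℕ) : 0 < π ^ 2 * ((j : ℝ) + 1 / 2) ^ 2 := by positivity
  have hν := summable_norm_inv_mul_nat_add_sq (π ^ 2) (1 / 2)
  obtain ⟨hprodμ, hprodν, hprod, hlim⟩ :=
    gamma_identification_limit_general (M := 1) (fun j => (hpos j).ne') (fun j => (hν₀ j).ne') hν
      (summable_norm_div_sub_one_of_norm_sub_le (fun j => (hν₀ j).ne') hν hasymp)
      IsOrderBornology.atTop_le_cobounded
      (by simpa only [one_mul] using eventually_atTop_norm_le_norm_add fun j => (hν₀ j).le)
  exact ⟨fun y => hprodμ (y ^ 2), fun y => hprodν (y ^ 2), hprod,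
    hlim.comp (tendsto_pow_atTop two_ne_zero)⟩
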